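/- Let d ≥ 3 be an integer and define j(r) = ∫_0^∞ (4πt)^{−d/2} e^{−r²/(4t)} t^{−1} e^{−t} dt for r > 0 (the Lévy density of the variance gamma process, i.e. the subordinate Brownian motion for the gamma subordinator, whose Lévy density is μ(t) = e^{−t}/t and whose Laplace exponent is φ(λ) = log(1+λ)). Then j(r) ≍ r^{−d} as r → 0+; i.e. there are constants 0 < c ≤ C and r₀ > 0 with c r^{−d} ≤ j(r) ≤ C r^{−d} for all r ∈ (0, r₀). -/

import Mathlib

/-!
Brownian scaling `t = r² u` turns `r ^ d * j r` into the integral of the heat kernel at distance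
one against `w (r² u) du / u`, where `w t = t * μ t`. For the gamma subordinator `w t = exp (-t)`
is bounded and tends to `1` at `0`, so dominated convergence leaves `∫ p₁(u) du / u`, which the
substitution `u ↦ u⁻¹` identifies with `π ^ (-d / 2) * Γ (d / 2)`.
-/

open MeasureTheory Set Filter Topology

section InverseGamma

variable {s a : ℝ}

lemma integral_rpow_mul_exp_neg_div_Ioi (hs : 0 < s) (ha : 0 < a) :
    ∫ t in Ioi (0 : ℝ), t ^ (-s - 1) * Real.exp (-(a / t)) = (1 / a) ^ s * Real.Gamma s := by
  rw [← Real.integral_rpow_mul_exp_neg_mul_Ioi hs ha,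
    ← integral_comp_rpow_Ioi (fun t ↦ t ^ (s - 1) * Real.exp (-(a * t)))
      (show (-1 : ℝ) ≠ 0 by norm_num)]
  refine setIntegral_congr_fun measurableSet_Ioi fun t (ht : 0 < t) ↦ ?_
  have hpow : t ^ (-s - 1) = t ^ ((-1 : ℝ) - 1) * (t ^ (-1 : ℝ)) ^ (s - 1) := by
    rw [← Real.rpow_mul ht.le, ← Real.rpow_add ht]
    ring_nf
  simp only [hpow, Real.rpow_neg_one, smul_eq_mul, abs_neg, abs_one, one_mul, div_eq_mul_inv,
    mul_assoc]

lemma integrableOn_rpow_mul_exp_neg_div_Ioi (hs : 0 < s) (ha : 0 < a) :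
    IntegrableOn (fun t : ℝ ↦ t ^ (-s - 1) * Real.exp (-(a / t))) (Ioi 0) := by
  refine Integrable.of_integral_ne_zero ?_
  rw [integral_rpow_mul_exp_neg_div_Ioi hs ha]
  have := Real.Gamma_pos_of_pos hs
  positivity

end InverseGamma

/-- The transition density at distance `r` and time `t` of the Brownian motion with generator the
Laplacian, i.e. the heat kernel of dimension `d` as a function of the distance. The dimension is
a real parameter. -/
noncomputable def heatKernel (d r t : ℝ) : ℝ :=
  (4 * Real.pi * t) ^ (-d / 2) * Real.exp (-(r ^ 2 / (4 * t)))

section HeatKernel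

variable {d r t : ℝ}

lemma heatKernel_sq_mul (hr : 0 < r) (ht : 0 < t) :
    heatKernel d r (r ^ 2 * t) = r ^ (-d) * heatKernel d 1 t := by
  have hpow : (4 * Real.pi * (r ^ 2 * t)) ^ (-d / 2) =
      r ^ (-d) * (4 * Real.pi * t) ^ (-d / 2) := by
    rw [show 4 * Real.pi * (r ^ 2 * t) = r ^ 2 * (4 * Real.pi * t) by ring,
      Real.mul_rpow (by positivity) (by positivity), ← Real.rpow_natCast_mul hr.le]
    congr 2
    push_cast
    ring
  have hexp : r ^ 2 / (4 * (r ^ 2 * t)) = 1 ^ 2 / (4 * t) := by field_simp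
  rw [heatKernel, heatKernel, hpow, hexp, mul_assoc]

lemma heatKernel_one_div_self (ht : 0 < t) :
    heatKernel d 1 t / t =
      (4 * Real.pi) ^ (-d / 2) * (t ^ (-(d / 2) - 1) * Real.exp (-(1 / 4 / t))) := by
  rw [heatKernel, Real.mul_rpow (by positivity) ht.le, Real.rpow_sub_one ht.ne', one_pow,
    ← div_div, neg_div]
  ring

lemma integrableOn_heatKernel_one_div_self (hd : 0 < d) :
    IntegrableOn (fun t ↦ heatKernel d 1 t / t) (Ioi 0) := by
  refine (integrableOn_congr_fun (fun _ ht ↦ heatKernel_one_div_self ht) measurableSet_Ioi).2 ?_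
  exact (integrableOn_rpow_mul_exp_neg_div_Ioi (half_pos hd) (by norm_num)).const_mul _

lemma integral_heatKernel_one_div_self (hd : 0 < d) :
    ∫ t in Ioi (0 : ℝ), heatKernel d 1 t / t = Real.pi ^ (-d / 2) * Real.Gamma (d / 2) := by
  rw [setIntegral_congr_fun measurableSet_Ioi fun _ ht ↦ heatKernel_one_div_self ht,
    integral_const_mul, integral_rpow_mul_exp_neg_div_Ioi (half_pos hd) (by norm_num),
    one_div_one_div, Real.mul_rpow (by norm_num) Real.pi_pos.le, neg_div,
    Real.rpow_neg (by norm_num)]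
  field_simp

lemma rpow_mul_integral_heatKernel_mul (hr : 0 < r) (μ : ℝ → ℝ) :
    r ^ d * ∫ t in Ioi (0 : ℝ), heatKernel d r t * μ t =
      ∫ u in Ioi (0 : ℝ), heatKernel d 1 u / u * (r ^ 2 * u * μ (r ^ 2 * u)) := by
  have hsub := integral_comp_mul_left_Ioi (fun t ↦ heatKernel d r t * μ t) 0 (sq_pos_of_pos hr)
  rw [mul_zero, smul_eq_mul, eq_inv_mul_iff_mul_eq₀ (by positivity)] at hsub
  rw [← hsub, ← integral_const_mul, ← integral_const_mul]
  refine setIntegral_congr_fun measurableSet_Ioi fun u (hu : 0 < u) ↦ ?_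
  simp only [heatKernel_sq_mul hr hu, Real.rpow_neg hr.le]
  field_simp

lemma tendsto_rpow_mul_integral_heatKernel_mul {μ : ℝ → ℝ} {K m : ℝ} (hd : 0 < d)
    (hμ : Measurable μ) (hbound : ∀ t, 0 < t → |t * μ t| ≤ K)
    (hlim : Tendsto (fun t ↦ t * μ t) (𝓝[>] 0) (𝓝 m)) :
    Tendsto (fun r ↦ r ^ d * ∫ t in Ioi (0 : ℝ), heatKernel d r t * μ t) (𝓝[>] 0)
      (𝓝 (Real.pi ^ (-d / 2) * Real.Gamma (d / 2) * m)) := by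
  have hint := integrableOn_heatKernel_one_div_self hd
  rw [← integral_heatKernel_one_div_self hd, ← integral_mul_const]
  refine (tendsto_integral_filter_of_dominated_convergence
    (F := fun r u ↦ heatKernel d 1 u / u * (r ^ 2 * u * μ (r ^ 2 * u)))
    (fun u ↦ |heatKernel d 1 u / u| * K) ?measurable ?dominated (hint.abs.mul_const K)
    ?pointwise).congr' ?scaling
  case measurable =>
    exact .of_forall fun r ↦ hint.aestronglyMeasurable.mul (by fun_prop)
  case dominated =>
    filter_upwards [self_mem_nhdsWithin] with r (hr : 0 < r)
    filter_upwards [ae_restrict_mem measurableSet_Ioi] with u (hu : 0 < u)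
    rw [Real.norm_eq_abs, abs_mul]
    gcongr
    exact hbound _ (by positivity)
  case pointwise =>
    filter_upwards [ae_restrict_mem measurableSet_Ioi] with u (hu : 0 < u)
    have hscale : Tendsto (fun r : ℝ ↦ r ^ 2 * u) (𝓝[>] 0) (𝓝[>] 0) := by
      refine tendsto_nhdsWithin_iff.2 ⟨?_, ?_⟩
      · exact (Continuous.tendsto' (by fun_prop) _ _ (by simp)).mono_left nhdsWithin_le_nhds
      · filter_upwards [self_mem_nhdsWithin] with r (hr : 0 < r)
        exact mul_pos (by positivity) hu
    exact (hlim.comp hscale).const_mul _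
  case scaling =>
    filter_upwards [self_mem_nhdsWithin] with r hr
    exact (rpow_mul_integral_heatKernel_mul hr μ).symm

end HeatKernel

lemma exists_rpow_neg_bounds_of_tendsto {f : ℝ → ℝ} {s L : ℝ} (hL : 0 < L)
    (hf : Tendsto (fun r ↦ r ^ s * f r) (𝓝[>] 0) (𝓝 L)) :
    ∃ c C r₀ : ℝ, 0 < c ∧ c ≤ C ∧ 0 < r₀ ∧ ∀ r, 0 < r → r < r₀ →
      c * r ^ (-s) ≤ f r ∧ f r ≤ C * r ^ (-s) := by
  have hIcc : Icc (L / 2) (2 * L) ∈ 𝓝 L := Icc_mem_nhds (by linarith) (by linarith)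
  obtain ⟨r₀, hr₀, hsub⟩ := mem_nhdsGT_iff_exists_Ioo_subset.1 (hf hIcc)
  refine ⟨L / 2, 2 * L, r₀, by positivity, by linarith, hr₀, fun r hr hrr₀ ↦ ?_⟩
  obtain ⟨hlower, hupper⟩ := hsub ⟨hr, hrr₀⟩
  have hpow : 0 < r ^ s := by positivity
  rw [Real.rpow_neg hr.le, ← div_eq_mul_inv, ← div_eq_mul_inv, div_le_iff₀' hpow,
    le_div_iff₀' hpow]
  exact ⟨hlower, hupper⟩

theorem variance_gamma_jump_asymp_general {d : ℝ} (hd : 0 < d) :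
    Tendsto (fun r ↦ r ^ d * ∫ t in Ioi (0 : ℝ), heatKernel d r t * (Real.exp (-t) / t)) (𝓝[>] 0)
      (𝓝 (Real.pi ^ (-d / 2) * Real.Gamma (d / 2))) := by
  have hweight : ∀ t : ℝ, 0 < t → t * (Real.exp (-t) / t) = Real.exp (-t) :=
    fun t ht ↦ mul_div_cancel₀ _ ht.ne'
  have hbound : ∀ t : ℝ, 0 < t → |t * (Real.exp (-t) / t)| ≤ 1 := fun t ht ↦ by
    rw [hweight t ht, Real.abs_exp]
    exact Real.exp_le_one_iff.2 (neg_nonpos.2 ht.le)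
  have hlim : Tendsto (fun t : ℝ ↦ t * (Real.exp (-t) / t)) (𝓝[>] 0) (𝓝 1) := by
    refine ((Continuous.tendsto' (f := fun t ↦ Real.exp (-t)) (by fun_prop) 0 1
      (by simp)).mono_left nhdsWithin_le_nhds).congr' ?_
    filter_upwards [self_mem_nhdsWithin] with t ht using (hweight t ht).symm
  simpa only [mul_one] using
    tendsto_rpow_mul_integral_heatKernel_mul hd (by fun_prop) hbound hlim

/-- The Lévy density of the variance gamma process satisfies `j(r) ≍ r^{-d}` as `r → 0+`. -/
theorem variance_gamma_jump_asymp
    (d : ℕ) (hd : 3 ≤ d) :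
    ∃ c C r₀ : ℝ, 0 < c ∧ c ≤ C ∧ 0 < r₀ ∧ ∀ r, 0 < r → r < r₀ →
      c * r ^ (-(d:ℝ)) ≤
        (∫ t in Ioi (0:ℝ),
          (4 * Real.pi * t) ^ (-(d:ℝ) / 2) * Real.exp (-(r ^ 2 / (4 * t))) *
            (Real.exp (-t) / t)) ∧
      (∫ t in Ioi (0:ℝ),
          (4 * Real.pi * t) ^ (-(d:ℝ) / 2) * Real.exp (-(r ^ 2 / (4 * t))) *
            (Real.exp (-t) / t)) ≤ C * r ^ (-(d:ℝ)) := by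
  have hd' : (0 : ℝ) < d := by exact_mod_cast (show 0 < d by omega)
  exact exists_rpow_neg_bounds_of_tendsto
    (mul_pos (Real.rpow_pos_of_pos Real.pi_pos _) (Real.Gamma_pos_of_pos (half_pos hd')))
    (variance_gamma_jump_asymp_general hd')
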